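/- Let c₀ > 0 be a rainbow-cycle constant and let r ≥ 4 be even. Then for all sufficiently large n (larger than a constant depending only on r), all δ ∈ (0,1), and every family H_1,…,H_k of r-uniform matchings over [n] with |H_i| ≥ δ·n for all i ∈ [k] and k ≥ 2^{r²+1}·c₀·δ^{-1}·n^{1-2/r}·(log₂ n)², there exists a rainbow even cover of H_1,…,H_k, i.e., a nonempty collection of hyperedges, at most one taken from each H_i, whose symmetric difference is empty. -/

import Mathlib

/-- `c₀ > 0` is a rainbow-cycle constant: for every `N ≥ 3`, every finite index
set (modeled as `Fin τ`), every `N`-element vertex set `V`, and every assignment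
of a matching `M t` of `2`-element subsets of `V` to each index `t`, if
`Σ_t |M t| ≥ c₀·N·log₂ N·log₂ log₂ N` then some nonempty subfamily, with one
edge chosen per index, has empty symmetric difference (equivalently, every
vertex lies in an even number of the chosen edges): a rainbow cycle. -/
def IsRainbowCycleConst (c₀ : ℝ) : Prop :=
  ∀ (N : ℕ), 3 ≤ N →
    ∀ (τ : ℕ) (V : Type) [Fintype V] [DecidableEq V], Fintype.card V = N →
      ∀ M : Fin τ → Finset (Finset V),
        (∀ t, ∀ e ∈ M t, e.card = 2) →
        (∀ t, ∀ e ∈ M t, ∀ e' ∈ M t, e ≠ e' → Disjoint e e') →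
        c₀ * N * Real.logb 2 N * Real.logb 2 (Real.logb 2 N) ≤
          ((∑ t : Fin τ, (M t).card : ℕ) : ℝ) →
        ∃ S : Finset (Fin τ), S.Nonempty ∧ ∃ e : Fin τ → Finset V,
          (∀ t ∈ S, e t ∈ M t) ∧
          ∀ x : V, Even ((S.filter fun t => x ∈ e t).card)

/-- A rainbow even cover of hypergraphs `H 1, …, H k` over `[n]`: a nonempty
set `S` of indices together with a choice of one hyperedge `E i ∈ H i` for each
`i ∈ S` whose symmetric difference is empty, i.e. every point of `[n]` lies in
an even number of the chosen hyperedges. -/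
def HasRainbowEvenCover {n k : ℕ} (H : Fin k → Finset (Finset (Fin n))) : Prop :=
  ∃ S : Finset (Fin k), S.Nonempty ∧ ∃ E : Fin k → Finset (Fin n),
    (∀ i ∈ S, E i ∈ H i) ∧ ∀ x : Fin n, Even ((S.filter fun i => x ∈ E i).card)

open Finset

lemma aux_choose_a (M a E D : ℕ) : ∀ j : ℕ, a + j ≤ E → D + (a + j) ≤ M →
    M.choose a * D ^ j ≤ M.choose (a + j) * E ^ j := by
  intro j
  induction j with
  | zero => intros; simp
  | succ j ih =>
    intro h1 h2
    have h := ih (by omega) (by omega)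
    have hs := Nat.choose_succ_right_eq M (a + j)
    calc M.choose a * D ^ (j+1) = (M.choose a * D ^ j) * D := by ring
      _ ≤ (M.choose (a + j) * E ^ j) * (M - (a + j)) := Nat.mul_le_mul h (by omega)
      _ = (M.choose (a + j) * (M - (a + j))) * E ^ j := by ring
      _ = (M.choose (a + j + 1) * (a + j + 1)) * E ^ j := by rw [hs]
      _ ≤ (M.choose (a + j + 1) * E) * E ^ j :=
          Nat.mul_le_mul_right _ (Nat.mul_le_mul_left _ (by omega))
      _ = _ := by rw [← add_assoc]; ring

lemma aux_choose_b (M a : ℕ) : ∀ j : ℕ,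
    (M + j).choose (a + j) * a ^ j ≤ (M + j) ^ j * M.choose a := by
  intro j
  induction j with
  | zero => simp
  | succ j ih =>
    have hs := Nat.add_one_mul_choose_eq (M + j) (a + j)
    calc (M + (j+1)).choose (a + (j+1)) * a ^ (j+1)
        = ((M + j + 1).choose (a + j + 1) * a) * a ^ j := by rw [← add_assoc, ← add_assoc]; ring
      _ ≤ ((M + j + 1).choose (a + j + 1) * (a + j + 1)) * a ^ j :=
          Nat.mul_le_mul_right _ (Nat.mul_le_mul_left _ (by omega))
      _ = (M + j + 1) * ((M + j).choose (a + j) * a ^ j) := by rw [← hs]; ring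
      _ ≤ (M + j + 1) * ((M + j) ^ j * M.choose a) := Nat.mul_le_mul_left _ ih
      _ ≤ (M + j + 1) * ((M + j + 1) ^ j * M.choose a) :=
          Nat.mul_le_mul_left _ (Nat.mul_le_mul_right _ (Nat.pow_le_pow_left (by omega) _))
      _ = _ := by rw [← add_assoc]; ring

lemma aux_choose_c (M a D : ℕ) (hD : D + a ≤ M) : ∀ j : ℕ,
    (M + j).choose a * D ^ j ≤ (M + j) ^ j * M.choose a := by
  intro j
  induction j with
  | zero => simp
  | succ j ih =>
    have hs := Nat.choose_mul_succ_eq (M + j) a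
    calc (M + (j+1)).choose a * D ^ (j+1)
        = ((M + j + 1).choose a * D) * D ^ j := by rw [← add_assoc]; ring
      _ ≤ ((M + j + 1).choose a * (M + j + 1 - a)) * D ^ j :=
          Nat.mul_le_mul_right _ (Nat.mul_le_mul_left _ (by omega))
      _ = (M + j + 1) * ((M + j).choose a * D ^ j) := by rw [← hs]; ring
      _ ≤ (M + j + 1) * ((M + j) ^ j * M.choose a) := Nat.mul_le_mul_left _ ih
      _ ≤ (M + j + 1) * ((M + j + 1) ^ j * M.choose a) :=
          Nat.mul_le_mul_left _ (Nat.mul_le_mul_right _ (Nat.pow_le_pow_left (by omega) _))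
      _ = _ := by rw [← add_assoc]; ring

/-- Pruning a union of partial matchings to a matching. -/
lemma aux_prune {V X : Type} [Fintype V] [DecidableEq V] [DecidableEq X] (H : Finset X)
    (P : V → X → Prop) [∀ a c, Decidable (P a c)] (σ : X → V → V)
    (h1 : ∀ c ∈ H, ∀ a, P a c → P (σ c a) c)
    (h2 : ∀ c ∈ H, ∀ a, P a c → σ c (σ c a) = a)
    (h3 : ∀ c ∈ H, ∀ a, P a c → σ c a ≠ a) :
    ∃ M : Finset (Finset V), (∀ e ∈ M, e.card = 2) ∧
      (∀ e ∈ M, ∀ e' ∈ M, e ≠ e' → Disjoint e e') ∧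
      (∀ e ∈ M, ∃ c ∈ H, ∃ a, P a c ∧ e = {a, σ c a}) ∧
      ∑ c ∈ H, (univ.filter fun a => P a c).card ≤ 2 * M.card +
        2 * ∑ p ∈ H.offDiag, (univ.filter fun a => P a p.1 ∧ P a p.2).card := by
  classical
  let T : Finset (X × V) := (H ×ˢ univ).filter fun p => P p.2 p.1
  let G : Finset (X × V) := T.filter fun p =>
    (∀ c ∈ H, P p.2 c → c = p.1) ∧ (∀ c ∈ H, P (σ p.1 p.2) c → c = p.1)
  let B : Finset (X × V) := T.filter fun p => ∃ c ∈ H, c ≠ p.1 ∧ P p.2 c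
  let B' : Finset (X × V) := T.filter fun p => ∃ c ∈ H, c ≠ p.1 ∧ P (σ p.1 p.2) c
  let f : X × V → Finset V := fun p => {p.2, σ p.1 p.2}
  have key : ∀ p ∈ G, ∀ x ∈ f p, P x p.1 ∧ (∀ c ∈ H, P x c → c = p.1) ∧ f p = {x, σ p.1 x} := by
    rintro ⟨c, a⟩ hp x hx
    simp only [G, T, mem_filter, mem_product, mem_univ, and_true] at hp
    obtain ⟨⟨hc, hP⟩, hu1, hu2⟩ := hp
    simp only [f, mem_insert, mem_singleton] at hx ⊢
    rcases hx with rfl | rfl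
    · exact ⟨hP, hu1, rfl⟩
    · refine ⟨h1 c hc a hP, hu2, ?_⟩
      rw [h2 c hc a hP, Finset.pair_comm]
  have hGT : ∀ p ∈ G, p.1 ∈ H ∧ P p.2 p.1 := by
    intro p hp
    simp only [G, T, mem_filter, mem_product, mem_univ, and_true] at hp
    exact hp.1
  refine ⟨G.image f, ?_, ?_, ?_, ?_⟩
  · intro e he
    obtain ⟨p, hp, rfl⟩ := mem_image.1 he
    obtain ⟨hc, hP⟩ := hGT p hp
    exact card_pair (h3 _ hc _ hP).symm
  · intro e he e' he' hne
    obtain ⟨p, hp, rfl⟩ := mem_image.1 he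
    obtain ⟨q, hq, rfl⟩ := mem_image.1 he'
    rw [Finset.disjoint_left]
    intro x hx hx'
    obtain ⟨a1, a2, a3⟩ := key p hp x hx
    obtain ⟨b1, b2, b3⟩ := key q hq x hx'
    apply hne
    rw [a3, b3, a2 _ (hGT q hq).1 b1]
  · intro e he
    obtain ⟨p, hp, rfl⟩ := mem_image.1 he
    obtain ⟨hc, hP⟩ := hGT p hp
    exact ⟨p.1, hc, p.2, hP, rfl⟩
  · have hT : ∑ c ∈ H, (univ.filter fun a => P a c).card = T.card := by
      simp only [T, card_filter, sum_product]
    have hG : G.card ≤ 2 * (G.image f).card := by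
      apply Finset.card_le_mul_card_image
      intro e he
      obtain ⟨p, hp, rfl⟩ := mem_image.1 he
      have : (f p).card ≤ 2 := card_le_two
      refine le_trans ?_ this
      apply Finset.card_le_card_of_injOn Prod.snd
      · intro q hq
        have hq := mem_filter.1 hq
        rw [← hq.2]
        simp [f]
      · intro q hq q' hq' hqq
        have hq := mem_filter.1 hq
        have hq' := mem_filter.1 hq'
        have k1 := key q hq.1 q.2 (by simp [f])
        have k2 := key q' hq'.1 q.2 (by rw [hqq]; simp [f])
        have := k1.2.1 _ (hGT q' hq'.1).1 k2.1
        exact Prod.ext this.symm hqq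
    have hB : B.card ≤ ∑ p ∈ H.offDiag, (univ.filter fun a => P a p.1 ∧ P a p.2).card := by
      have : B ⊆ (H.offDiag.sigma fun p => univ.filter fun a => P a p.1 ∧ P a p.2).image
          (fun q => (q.1.1, q.2)) := by
        rintro ⟨c, a⟩ hp
        simp only [B, T, mem_filter, mem_product, mem_univ, and_true] at hp
        obtain ⟨⟨hc, hP⟩, c', hc', hne, hP'⟩ := hp
        rw [mem_image]
        refine ⟨⟨(c, c'), a⟩, ?_, rfl⟩
        simp [hc, hc', hne.symm, hP, hP']
      refine (card_le_card this).trans (card_image_le.trans ?_)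
      rw [card_sigma]
    have hB' : B'.card ≤ B.card := by
      apply Finset.card_le_card_of_injOn (fun p => (p.1, σ p.1 p.2))
      · rintro ⟨c, a⟩ hp
        simp only [B', B, T, coe_filter, mem_filter, mem_product, mem_univ, and_true, Set.mem_ofPred_eq] at hp ⊢
        exact ⟨⟨hp.1.1, h1 _ hp.1.1 _ hp.1.2⟩, hp.2⟩
      · rintro ⟨c, a⟩ hp ⟨c', a'⟩ hp' h
        simp only [B', T, coe_filter, mem_filter, mem_product, mem_univ, and_true, Set.mem_ofPred_eq] at hp hp'
        simp only [Prod.mk.injEq] at h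
        obtain ⟨rfl, h⟩ := h
        have := congrArg (σ c) h
        rw [h2 _ hp.1.1 _ hp.1.2, h2 _ hp'.1.1 _ hp'.1.2] at this
        rw [this]
    have hsub : T ⊆ G ∪ (B ∪ B') := by
      intro p hp
      simp only [G, B, B', mem_union, mem_filter, hp, true_and]
      by_cases hb : ∃ c ∈ H, c ≠ p.1 ∧ P p.2 c
      · exact Or.inr (Or.inl hb)
      by_cases hb' : ∃ c ∈ H, c ≠ p.1 ∧ P (σ p.1 p.2) c
      · exact Or.inr (Or.inr hb')
      left
      push Not at hb hb'
      exact ⟨fun c hc hP => by_contra fun h => hb c hc h hP,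
        fun c hc hP => by_contra fun h => hb' c hc h hP⟩
    have hc := card_le_card hsub
    have h5 := card_union_le G (B ∪ B')
    have h6 := card_union_le B B'
    rw [hT]
    omega

abbrev KV (n l : ℕ) : Type := {A : Finset (Fin n) // A.card = l}

lemma aux_card_lower {n l s : ℕ} (C : Finset (Fin n)) (hC : C.card = 2 * s) (hl : s ≤ l) :
    (2 * s).choose s * (n - 2 * s).choose (l - s) ≤
      (univ.filter fun A : KV n l => (A.1 ∩ C).card = s).card := by
  have h : ((powersetCard s C) ×ˢ (powersetCard (l - s) Cᶜ)).card =
      (2 * s).choose s * (n - 2 * s).choose (l - s) := by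
    rw [card_product, card_powersetCard, card_powersetCard, card_compl, hC, Fintype.card_fin]
  rw [← h]
  have h2 : (univ.filter fun A : KV n l => (A.1 ∩ C).card = s).card =
      ((univ.filter fun A : KV n l => (A.1 ∩ C).card = s).image Subtype.val).card :=
    (card_image_of_injective _ Subtype.val_injective).symm
  rw [h2]
  have aux : ∀ a b : Finset (Fin n), a ⊆ C → b ⊆ Cᶜ → (a ∪ b) ∩ C = a ∧ (a ∪ b) \ C = b := by
    intro a b ha hb
    have hb' : ∀ x ∈ b, x ∉ C := fun x hx => by simpa using hb hx
    constructor
    · ext x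
      simp only [mem_inter, mem_union]
      have := @ha x; have := hb' x; tauto
    · ext x
      simp only [mem_sdiff, mem_union]
      have := @ha x; have := hb' x; tauto
  apply Finset.card_le_card_of_injOn (fun p => p.1 ∪ p.2)
  · rintro ⟨a, b⟩ hp
    simp only [coe_product, Set.mem_prod, mem_coe, mem_powersetCard] at hp
    obtain ⟨⟨ha, ha'⟩, hb, hb'⟩ := hp
    have hd : Disjoint a b := by
      rw [Finset.disjoint_left]; intro x hx hx'
      have := hb hx'
      exact (by simpa using this : x ∉ C) (ha hx)
    simp only [mem_coe, mem_image, mem_filter, mem_univ, true_and]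
    refine ⟨⟨a ∪ b, ?_⟩, ?_, rfl⟩
    · rw [card_union_of_disjoint hd]; omega
    · simp only; rw [(aux a b ha hb).1, ha']
  · rintro ⟨a, b⟩ hp ⟨a', b'⟩ hp' h
    simp only [coe_product, Set.mem_prod, mem_coe, mem_powersetCard] at hp hp'
    have k := aux a b hp.1.1 hp.2.1
    have k' := aux a' b' hp'.1.1 hp'.2.1
    simp only at h
    rw [h] at k
    exact Prod.ext (k.1.symm.trans k'.1) (k.2.symm.trans k'.2)

lemma aux_card_upper {n l s : ℕ} (C C' : Finset (Fin n)) (hC : C.card = 2 * s)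
    (hC' : C'.card = 2 * s) (hd : Disjoint C C') :
    (univ.filter fun A : KV n l => (A.1 ∩ C).card = s ∧ (A.1 ∩ C').card = s).card ≤
      ((n - 2 * s).choose (l - 2 * s)) * ((2 * s).choose s * (2 * s).choose s) := by
  have h : ((powersetCard s C) ×ˢ (powersetCard s C')).card =
      (2 * s).choose s * (2 * s).choose s := by
    rw [card_product, card_powersetCard, card_powersetCard, hC, hC']
  rw [← h]
  apply Finset.card_le_mul_card_image_of_maps_to (f := fun A : KV n l => (A.1 ∩ C, A.1 ∩ C'))
  · intro A hA
    simp only [mem_filter, mem_univ, true_and] at hA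
    simp only [mem_product, mem_powersetCard]
    exact ⟨⟨inter_subset_right, hA.1⟩, inter_subset_right, hA.2⟩
  · rintro ⟨a, b⟩ hp
    simp only [mem_product, mem_powersetCard] at hp
    obtain ⟨⟨ha, ha'⟩, hb, hb'⟩ := hp
    have hab : (a ∪ b).card = 2 * s := by
      rw [card_union_of_disjoint (disjoint_of_subset_left ha (disjoint_of_subset_right hb hd))]
      omega
    have h3 : (powersetCard (l - 2 * s) (a ∪ b)ᶜ).card = (n - 2 * s).choose (l - 2 * s) := by
      rw [card_powersetCard, card_compl, hab, Fintype.card_fin]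
    rw [← h3]
    have hs : ∀ A : KV n l, (A.1 ∩ C, A.1 ∩ C') = (a, b) → a ∪ b ⊆ A.1 := by
      intro A h
      simp only [Prod.mk.injEq] at h
      rw [← h.1, ← h.2]
      exact union_subset inter_subset_left inter_subset_left
    apply Finset.card_le_card_of_injOn (fun A : KV n l => A.1 \ (a ∪ b))
    · intro A hA
      have hA := mem_filter.1 hA
      have := hs A hA.2
      simp only [mem_coe, mem_powersetCard]
      refine ⟨?_, ?_⟩
      · intro x; simp only [mem_sdiff, mem_compl]; tauto
      · rw [card_sdiff_of_subset this, A.2, hab]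
    · intro A hA A' hA' h
      have hA := hs A (mem_filter.1 hA).2
      have hA' := hs A' (mem_filter.1 hA').2
      apply Subtype.ext
      simp only at h
      rw [← sdiff_union_of_subset hA, h, sdiff_union_of_subset hA']

lemma aux_symm {n s : ℕ} (A C : Finset (Fin n)) (hC : C.card = 2 * s) (h : (A ∩ C).card = s) :
    (symmDiff A C).card = A.card ∧ (symmDiff A C ∩ C).card = s := by
  have h1 : symmDiff A C ∩ C = C \ A := by
    ext x; simp only [mem_inter, mem_symmDiff, mem_sdiff]; tauto
  have h2 : symmDiff A C \ C = A \ C := by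
    ext x; simp only [mem_sdiff, mem_symmDiff]; tauto
  have h3 := card_inter_add_card_sdiff C A
  rw [inter_comm C A] at h3
  have h4 := card_inter_add_card_sdiff A C
  have h5 := card_inter_add_card_sdiff (symmDiff A C) C
  rw [h1, h2] at h5
  rw [h1]
  omega

/-- The swap map of the Kikuchi graph. -/
noncomputable def kswap {n l : ℕ} (C : Finset (Fin n)) (A : KV n l) : KV n l :=
  open Classical in
  if h : (symmDiff A.1 C).card = l then ⟨symmDiff A.1 C, h⟩ else A

lemma aux_matching {n l s : ℕ} (hs : 2 ≤ s) (hl : s ≤ l) (H : Finset (Finset (Fin n)))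
    (hu : ∀ e ∈ H, e.card = 2 * s) (hd : ∀ e ∈ H, ∀ e' ∈ H, e ≠ e' → Disjoint e e')
    (hXY : n * 4 ^ s * (n - 2 * s).choose (l - 2 * s) ≤ (n - 2 * s).choose (l - s)) :
    ∃ M : Finset (Finset (KV n l)), (∀ e ∈ M, e.card = 2) ∧
      (∀ e ∈ M, ∀ e' ∈ M, e ≠ e' → Disjoint e e') ∧
      (∀ e ∈ M, ∃ c ∈ H, ∃ a b : KV n l, a ≠ b ∧ b.1 = symmDiff a.1 c ∧ e = {a, b}) ∧
      H.card * (n - 2 * s).choose (l - s) ≤ M.card := by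
  classical
  have hk : ∀ c ∈ H, ∀ a : KV n l, (a.1 ∩ c).card = s → (kswap c a).1 = symmDiff a.1 c := by
    intro c hc a ha
    have := (aux_symm a.1 c (hu c hc) ha).1
    unfold kswap
    rw [dif_pos (this.trans a.2)]
  have hk1 : ∀ c ∈ H, ∀ a : KV n l, (a.1 ∩ c).card = s → ((kswap c a).1 ∩ c).card = s := by
    intro c hc a ha
    rw [hk c hc a ha]
    exact (aux_symm a.1 c (hu c hc) ha).2
  have hk3 : ∀ c ∈ H, ∀ a : KV n l, (a.1 ∩ c).card = s → kswap c a ≠ a := by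
    intro c hc a ha h
    have h1 := congrArg Subtype.val h
    rw [hk c hc a ha] at h1
    have : c = ∅ := by simpa using h1
    have h2 := hu c hc
    rw [this] at h2
    simp at h2
    omega
  obtain ⟨M, m1, m2, m3, m4⟩ := aux_prune (V := KV n l) H (fun a c => (a.1 ∩ c).card = s) kswap
    hk1 (fun c hc a ha => by
      apply Subtype.ext
      rw [hk c hc _ (hk1 c hc a ha), hk c hc a ha, symmDiff_symmDiff_cancel_right]) hk3
  refine ⟨M, m1, m2, ?_, ?_⟩
  · intro e he
    obtain ⟨c, hc, a, ha, rfl⟩ := m3 e he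
    exact ⟨c, hc, a, kswap c a, (hk3 c hc a ha).symm, hk c hc a ha, rfl⟩
  · set X := (n - 2 * s).choose (l - s) with hX
    set Y := (n - 2 * s).choose (l - 2 * s) with hY
    set b := (2 * s).choose s with hb
    set m := H.card with hm
    have e1 : m * (b * X) ≤ ∑ c ∈ H, (univ.filter fun A : KV n l => (A.1 ∩ c).card = s).card := by
      rw [← smul_eq_mul, hm]
      exact Finset.card_nsmul_le_sum _ _ _ fun c hc => aux_card_lower c (hu c hc) hl
    have e2 : ∑ p ∈ H.offDiag,
        (univ.filter fun A : KV n l => (A.1 ∩ p.1).card = s ∧ (A.1 ∩ p.2).card = s).card ≤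
        (m * m) * (Y * (b * b)) := by
      have : H.offDiag.card ≤ m * m := by rw [offDiag_card]; exact Nat.sub_le _ _
      refine le_trans ?_ (Nat.mul_le_mul_right _ this)
      rw [← smul_eq_mul]
      apply Finset.sum_le_card_nsmul
      intro p hp
      rw [mem_offDiag] at hp
      exact aux_card_upper _ _ (hu _ hp.1) (hu _ hp.2.1) (hd _ hp.1 _ hp.2.1 hp.2.2)
    have e3 : m * (2 * s) ≤ n := by
      have h1 : (H.biUnion id).card = ∑ c ∈ H, c.card :=
        card_biUnion fun c hc c' hc' hne => hd c hc c' hc' hne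
      rw [sum_congr rfl hu, sum_const, smul_eq_mul] at h1
      have := card_le_univ (H.biUnion id)
      rw [Fintype.card_fin] at this
      exact h1 ▸ this
    have e4 : b ≤ 4 ^ s := by
      have := Nat.choose_le_two_pow (2 * s) s
      rw [pow_mul] at this
      exact this
    have e5 : 4 ≤ b := by
      have h0 : (2 * s).choose 1 ≤ b := Nat.choose_le_centralBinom 1 s
      rw [Nat.choose_one_right] at h0
      omega
    have e6 : 4 * m ≤ n := by nlinarith
    have e7 : 4 * m * b * Y ≤ X := le_trans (by gcongr) hXY
    have e8 : m * b * (4 * m * b * Y) ≤ m * b * X := Nat.mul_le_mul_left _ e7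
    have e9 : 4 * (m * X) ≤ m * b * X := by
      have := Nat.mul_le_mul_right (m * X) e5
      calc _ ≤ b * (m * X) := this
        _ = _ := by ring
    have e10 : m * b * (4 * m * b * Y) = 4 * ((m * m) * (Y * (b * b))) := by ring
    have e11 : m * (b * X) = m * b * X := by ring
    have m4' := m4
    generalize hq1 : m * b * X = q1 at *
    generalize hq2 : (m * m) * (Y * (b * b)) = q2 at *
    generalize hq3 : m * X = q3 at *
    have := e1.trans m4'
    omega

lemma aux_cover {n l k : ℕ} (H : Fin k → Finset (Finset (Fin n)))
    (M : Fin k → Finset (Finset (KV n l)))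
    (hM : ∀ i, ∀ e ∈ M i, ∃ c ∈ H i, ∃ a b : KV n l,
      a ≠ b ∧ b.1 = symmDiff a.1 c ∧ e = {a, b})
    (S : Finset (Fin k)) (hS : S.Nonempty) (e : Fin k → Finset (KV n l))
    (he : ∀ t ∈ S, e t ∈ M t) (hev : ∀ x, Even ((S.filter fun t => x ∈ e t).card)) :
    HasRainbowEvenCover H := by
  classical
  have h : ∀ t, ∃ c, t ∈ S → c ∈ H t ∧ ∃ a b : KV n l,
      a ≠ b ∧ b.1 = symmDiff a.1 c ∧ e t = {a, b} := by
    intro t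
    by_cases ht : t ∈ S
    · obtain ⟨c, hc, h⟩ := hM t _ (he t ht)
      exact ⟨c, fun _ => ⟨hc, h⟩⟩
    · exact ⟨∅, fun h => absurd h ht⟩
  choose E hE using h
  refine ⟨S, hS, E, fun i hi => (hE i hi).1, fun x => ?_⟩
  rw [← ZMod.natCast_eq_zero_iff_even]
  have e1 : (((S.filter fun i => x ∈ E i).card : ℕ) : ZMod 2) =
      ∑ t ∈ S, ∑ v ∈ e t, if x ∈ v.1 then (1 : ZMod 2) else 0 := by
    rw [card_filter, Nat.cast_sum]
    apply sum_congr rfl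
    intro t ht
    obtain ⟨-, a, b, hab, hb, hh⟩ := hE t ht
    rw [hh, sum_pair hab, hb]
    have h2 : (1 : ZMod 2) + 1 = 0 := by decide
    simp only [mem_symmDiff]
    by_cases p : x ∈ a.1 <;> by_cases q : x ∈ E t <;> simp [p, q, h2]
  have e2 : ∀ t, (∑ v ∈ e t, if x ∈ v.1 then (1 : ZMod 2) else 0) =
      ∑ v : KV n l, if v ∈ e t then (if x ∈ v.1 then (1 : ZMod 2) else 0) else 0 := by
    intro t
    rw [← sum_filter]; simp
  rw [e1]
  simp only [e2]
  rw [sum_comm]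
  apply sum_eq_zero
  intro v _
  rw [← sum_filter, sum_const, nsmul_eq_mul, (ZMod.natCast_eq_zero_iff_even).2 (hev v), zero_mul]

lemma aux_logs (n l : ℕ) (hl : 1 ≤ l) (hn : 2 ≤ n) (h2l : 2 * l + 2 ≤ n) :
    Real.logb 2 (n.choose l : ℕ) * Real.logb 2 (Real.logb 2 (n.choose l : ℕ)) ≤
      l * Real.logb 2 n * Real.logb 2 n := by
  have hpos : (0 : ℝ) < (n.choose l : ℕ) := by
    exact_mod_cast Nat.choose_pos (by omega : l ≤ n)
  have hone : (1 : ℝ) ≤ (n.choose l : ℕ) := by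
    exact_mod_cast Nat.choose_pos (by omega : l ≤ n)
  have a0 : 0 ≤ Real.logb 2 (n.choose l : ℕ) := Real.logb_nonneg (by norm_num) hone
  have hL : 0 ≤ Real.logb 2 n := Real.logb_nonneg (by norm_num) (by exact_mod_cast (by omega : 1 ≤ n))
  have a1 : Real.logb 2 (n.choose l : ℕ) ≤ l * Real.logb 2 n := by
    rw [← Real.logb_pow]
    apply Real.logb_le_logb_of_le (by norm_num) hpos
    exact_mod_cast Nat.choose_le_pow n l
  have a2 : Real.logb 2 (n.choose l : ℕ) ≤ n := by
    rw [Real.logb_le_iff_le_rpow (by norm_num) hpos, Real.rpow_natCast]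
    exact_mod_cast Nat.choose_le_two_pow n l
  rcases a0.eq_or_lt with h | h
  · rw [← h, zero_mul]; positivity
  have a3 : Real.logb 2 (Real.logb 2 (n.choose l : ℕ)) ≤ Real.logb 2 n :=
    Real.logb_le_logb_of_le (by norm_num) h a2
  calc _ ≤ Real.logb 2 (n.choose l : ℕ) * Real.logb 2 n := mul_le_mul_of_nonneg_left a3 a0
    _ ≤ _ := mul_le_mul_of_nonneg_right a1 hL

lemma aux_numeric (s n : ℕ) (hs : 2 ≤ s) (hn : (64 * s) ^ 2 ≤ n) :
    ∃ l : ℕ, 4 * s ≤ l ∧ 8 * l ≤ n ∧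
      n * 4 ^ s * (n - 2 * s).choose (l - 2 * s) ≤ (n - 2 * s).choose (l - s) ∧ True ∧
      (l : ℝ) * (n.choose l : ℕ) ≤ 2 ^ ((s + s) ^ 2 + 1) *
        (n : ℝ) ^ ((1 : ℝ) - 2 / ((s + s : ℕ) : ℝ)) * n * ((n - 2 * s).choose (l - s) : ℕ) := by
  have hsR : (2 : ℝ) ≤ s := by exact_mod_cast hs
  have hn1 : 64 * s ≤ n := le_trans (Nat.le_self_pow (by norm_num) _) hn
  have hnR : (64 * s : ℝ) ≤ n := by exact_mod_cast hn1
  have hn0 : (0 : ℝ) < n := by linarith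
  set y : ℝ := (n : ℝ) ^ ((1 : ℝ) - 2 / ((s + s : ℕ) : ℝ)) with hy
  have hexp : ((1 : ℝ) - 2 / ((s + s : ℕ) : ℝ)) = 1 - 1 / s := by
    push_cast; field_simp; ring
  have hy0 : 0 < y := Real.rpow_pos_of_pos hn0 _
  have hys : n * y ^ s = (n : ℝ) ^ s := by
    rw [hy, hexp, ← Real.rpow_natCast, ← Real.rpow_mul hn0.le, ← Real.rpow_natCast (n : ℝ) s]
    nth_rewrite 1 [← Real.rpow_one (n : ℝ)]
    rw [← Real.rpow_add hn0]
    congr 1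
    field_simp; ring
  have hyn : y ≤ n := by
    conv_rhs => rw [← Real.rpow_one (n : ℝ)]
    rw [hy, hexp]
    apply Real.rpow_le_rpow_of_exponent_le (by linarith)
    have : (0 : ℝ) ≤ 1 / s := by positivity
    linarith
  have hy64 : 64 * (s : ℝ) ≤ y := by
    have h1 : (n : ℝ) ^ (1 / 2 : ℝ) ≤ y := by
      rw [hy, hexp]
      apply Real.rpow_le_rpow_of_exponent_le (by linarith)
      have : (1 : ℝ) / s ≤ 1 / 2 := by
        apply one_div_le_one_div_of_le <;> linarith
      linarith
    refine le_trans ?_ h1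
    rw [← Real.sqrt_eq_rpow]
    apply Real.le_sqrt_of_sq_le
    exact_mod_cast hn
  clear_value y
  set l := ⌊y / 8⌋₊ with hl
  have l1 : (l : ℝ) ≤ y / 8 := Nat.floor_le (by positivity)
  have l2 : y / 8 < l + 1 := Nat.lt_floor_add_one _
  have l3 : 4 * s ≤ l := by
    apply Nat.le_floor
    push_cast
    linarith
  have l4 : y / 16 ≤ (l : ℝ) := by linarith
  clear_value l
  have l5 : 8 * l ≤ n := by
    have : (8 * l : ℝ) ≤ n := by linarith
    exact_mod_cast this
  have hD : (n : ℝ) / 2 ≤ (n - 2 * s - l : ℕ) := by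
    rw [Nat.cast_sub (by omega), Nat.cast_sub (by omega)]
    push_cast
    linarith
  refine ⟨l, l3, l5, ?_, trivial, ?_⟩
  · have h := aux_choose_a (n - 2 * s) (l - 2 * s) l (n - 2 * s - l) s (by omega) (by omega)
    rw [show l - 2 * s + s = l - s by omega] at h
    set X := (n - 2 * s).choose (l - s)
    set Y := (n - 2 * s).choose (l - 2 * s)
    have h' : (Y : ℝ) * ((n - 2 * s - l : ℕ) : ℝ) ^ s ≤ X * (l : ℝ) ^ s := by exact_mod_cast h
    have h2 : (Y : ℝ) * (n / 2 : ℝ) ^ s ≤ X * (y / 8) ^ s := by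
      calc (Y : ℝ) * (n / 2 : ℝ) ^ s ≤ Y * ((n - 2 * s - l : ℕ) : ℝ) ^ s := by gcongr
        _ ≤ X * (l : ℝ) ^ s := h'
        _ ≤ _ := by gcongr
    have h3 : (Y : ℝ) * n * 4 ^ s * y ^ s ≤ X * y ^ s := by
      have e1 : (n : ℝ) * y ^ s = 2 ^ s * (n / 2 : ℝ) ^ s := by
        rw [hys, ← mul_pow]; congr 1; ring
      have e2 : y ^ s = 8 ^ s * (y / 8) ^ s := by
        rw [← mul_pow]; congr 1; ring
      have e3 : (8 : ℝ) ^ s = 4 ^ s * 2 ^ s := by rw [← mul_pow]; norm_num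
      calc (Y : ℝ) * n * 4 ^ s * y ^ s = 4 ^ s * Y * (n * y ^ s) := by ring
        _ = 8 ^ s * (Y * (n / 2 : ℝ) ^ s) := by rw [e1, e3]; ring
        _ ≤ 8 ^ s * (X * (y / 8) ^ s) := by gcongr
        _ = X * y ^ s := by rw [e2]; ring
    have h4 := le_of_mul_le_mul_right h3 (by positivity)
    have h5 : (n : ℝ) * 4 ^ s * Y ≤ X := by linarith
    exact_mod_cast h5
  · have hb := aux_choose_b (n - s) (l - s) s
    have hc := aux_choose_c (n - 2 * s) (l - s) (n - 2 * s - l) (by omega) s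
    rw [show n - s + s = n by omega, show l - s + s = l by omega] at hb
    rw [show n - 2 * s + s = n - s by omega] at hc
    set X := (n - 2 * s).choose (l - s)
    set Z := (n - s).choose (l - s)
    set N := n.choose l
    have hb' : (N : ℝ) * ((l - s : ℕ) : ℝ) ^ s ≤ (n : ℝ) ^ s * Z := by exact_mod_cast hb
    have hc' : (Z : ℝ) * ((n - 2 * s - l : ℕ) : ℝ) ^ s ≤ ((n - s : ℕ) : ℝ) ^ s * X := by
      exact_mod_cast hc
    have hls : y / 32 ≤ ((l - s : ℕ) : ℝ) := by
      rw [Nat.cast_sub (by omega)]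
      have : (4 * s : ℝ) ≤ l := by exact_mod_cast l3
      linarith
    have hns : ((n - s : ℕ) : ℝ) ≤ n := by exact_mod_cast Nat.sub_le _ _
    have k1 : (N : ℝ) * (y / 32) ^ s ≤ n ^ s * Z := le_trans (by gcongr) hb'
    have k2 : (Z : ℝ) * (n / 2) ^ s ≤ n ^ s * X := by
      calc (Z : ℝ) * (n / 2) ^ s ≤ Z * ((n - 2 * s - l : ℕ) : ℝ) ^ s := by gcongr
        _ ≤ ((n - s : ℕ) : ℝ) ^ s * X := hc'
        _ ≤ _ := by gcongr
    have k3 : (Z : ℝ) ≤ 2 ^ s * X := by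
      have : (Z : ℝ) * n ^ s ≤ (2 ^ s * X) * n ^ s := by
        have e : (n : ℝ) ^ s = 2 ^ s * (n / 2 : ℝ) ^ s := by
          rw [← mul_pow]; congr 1; ring
        calc (Z : ℝ) * n ^ s = 2 ^ s * (Z * (n / 2 : ℝ) ^ s) := by rw [e]; ring
          _ ≤ 2 ^ s * (n ^ s * X) := by gcongr
          _ = _ := by ring
      exact le_of_mul_le_mul_right this (by positivity)
    have k4 : (N : ℝ) ≤ 64 ^ s * n * X := by
      have : (N : ℝ) * y ^ s ≤ (64 ^ s * n * X) * y ^ s := by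
        have e : y ^ s = 32 ^ s * (y / 32) ^ s := by
          rw [← mul_pow]; congr 1; ring
        have e3 : (64 : ℝ) ^ s = 32 ^ s * 2 ^ s := by rw [← mul_pow]; norm_num
        calc (N : ℝ) * y ^ s = 32 ^ s * (N * (y / 32) ^ s) := by rw [e]; ring
          _ ≤ 32 ^ s * (n ^ s * Z) := by gcongr
          _ ≤ 32 ^ s * (n ^ s * (2 ^ s * X)) := by gcongr
          _ = 64 ^ s * X * n ^ s := by rw [e3]; ring
          _ = _ := by rw [← hys]; ring
      exact le_of_mul_le_mul_right this (by positivity)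
    have k5 : (64 : ℝ) ^ s ≤ 2 ^ ((s + s) ^ 2 + 1) := by
      rw [show (64 : ℝ) = 2 ^ 6 by norm_num, ← pow_mul]
      apply pow_le_pow_right₀ (by norm_num)
      nlinarith
    calc (l : ℝ) * N ≤ y * (64 ^ s * n * X) := by gcongr; linarith
      _ ≤ y * (2 ^ ((s + s) ^ 2 + 1) * n * X) := by gcongr
      _ = _ := by ring

/-- For every even `r ≥ 4` there is a threshold `N₀` (depending only on `r`)
such that for every rainbow-cycle constant `c₀ > 0`, all `n ≥ N₀`, all
`δ ∈ (0,1)`, and every family of `k ≥ 2^{r²+1}·c₀·δ⁻¹·n^{1-2/r}·(log₂ n)²`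
many `r`-uniform matchings over `[n]`, each of size at least `δ·n`, there is
a rainbow even cover. -/
theorem stmt5 (r : ℕ) (hreven : Even r) (hr4 : 4 ≤ r) :
    ∃ N₀ : ℕ, ∀ (c₀ : ℝ), 0 < c₀ → IsRainbowCycleConst c₀ →
      ∀ n : ℕ, N₀ ≤ n → ∀ δ : ℝ, 0 < δ → δ < 1 →
        ∀ (k : ℕ) (H : Fin k → Finset (Finset (Fin n))),
          (∀ i, ∀ e ∈ H i, e.card = r) →
          (∀ i, ∀ e ∈ H i, ∀ e' ∈ H i, e ≠ e' → Disjoint e e') →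
          (∀ i, δ * n ≤ ((H i).card : ℝ)) →
          (2 : ℝ) ^ (r ^ 2 + 1) * c₀ * δ⁻¹ * (n : ℝ) ^ ((1 : ℝ) - 2 / (r : ℝ)) *
              (Real.logb 2 n) ^ 2 ≤ (k : ℝ) →
          HasRainbowEvenCover H := by
  obtain ⟨s, rfl⟩ := hreven
  have hs : 2 ≤ s := by omega
  refine ⟨(64 * s) ^ 2, ?_⟩
  intro c₀ hc₀ hconst n hn δ hδ hδ1 k H hu hd hcard hk
  obtain ⟨l, b1, b2, b3, b4, b5⟩ := aux_numeric s n hs hn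
  have hu' : ∀ i, ∀ e ∈ H i, e.card = 2 * s := fun i e he => by rw [hu i e he]; ring
  have hM := fun i => aux_matching (l := l) hs (by omega) (H i) (hu' i) (hd i) b3
  choose M m1 m2 m3 m4 using hM
  have hN : Fintype.card (KV n l) = n.choose l := by
    rw [Fintype.card_finset_len, Fintype.card_fin]
  have hn1 : 64 * s ≤ n := le_trans (Nat.le_self_pow (by norm_num) _) hn
  have hN3 : n ≤ n.choose l := by
    have h := aux_choose_a n 1 l (l + 1) (l - 1) (by omega) (by omega)
    rw [Nat.choose_one_right, show 1 + (l - 1) = l by omega] at h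
    have h0 : 0 < l ^ (l - 1) := pow_pos (by omega) _
    refine Nat.le_of_mul_le_mul_right (le_trans ?_ h) h0
    exact Nat.mul_le_mul_left _ (Nat.pow_le_pow_left (by omega) _)
  have hNlog := aux_logs n l (by omega) (by omega) (by omega)
  obtain ⟨S, hS, e, he, hev⟩ := hconst (n.choose l) (by omega) k (KV n l) hN M m1 m2 (by
    set N := n.choose l with hNdef
    set X := (n - 2 * s).choose (l - s) with hXdef
    set L := Real.logb 2 n with hL
    set y : ℝ := (n : ℝ) ^ ((1 : ℝ) - 2 / ((s + s : ℕ) : ℝ)) with hy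
    have f1 : (k : ℝ) * (δ * n) * X ≤ ((∑ t : Fin k, (M t).card : ℕ) : ℝ) := by
      push_cast
      have : ∀ t ∈ (univ : Finset (Fin k)), δ * n * X ≤ ((M t).card : ℝ) := by
        intro t _
        have := m4 t
        calc δ * n * X ≤ ((H t).card : ℝ) * X :=
              mul_le_mul_of_nonneg_right (hcard t) (Nat.cast_nonneg _)
          _ ≤ _ := by exact_mod_cast this
      have h := Finset.card_nsmul_le_sum _ _ _ this
      rw [Finset.card_univ, Fintype.card_fin, nsmul_eq_mul] at h
      linarith
    refine le_trans ?_ f1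
    have hNpos : (0 : ℝ) ≤ N := Nat.cast_nonneg _
    have hy0 : 0 ≤ y := Real.rpow_nonneg (Nat.cast_nonneg _) _
    calc c₀ * N * Real.logb 2 N * Real.logb 2 (Real.logb 2 N)
        = c₀ * N * (Real.logb 2 N * Real.logb 2 (Real.logb 2 N)) := by ring
      _ ≤ c₀ * N * (l * L * L) := by
          apply mul_le_mul_of_nonneg_left hNlog; positivity
      _ = c₀ * L ^ 2 * (l * N) := by ring
      _ ≤ c₀ * L ^ 2 * (2 ^ ((s + s) ^ 2 + 1) * y * n * X) := by
          apply mul_le_mul_of_nonneg_left b5; positivity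
      _ = (2 ^ ((s + s) ^ 2 + 1) * c₀ * δ⁻¹ * y * L ^ 2) * (δ * n) * X := by
          field_simp
      _ ≤ k * (δ * n) * X := by
          apply mul_le_mul_of_nonneg_right _ (Nat.cast_nonneg _)
          apply mul_le_mul_of_nonneg_right hk; positivity)
  exact aux_cover H M m3 S hS e he hev
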